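/- Let q > 5, let B be a Baer subplane of PG(2,q²) tangent to ℓ∞ at T̄ = B ∩ ℓ∞, and let C be an F_q-conic contained in B with T̄ ∈ C. Then ℓ∞ is secant to C⁺, say C⁺ ∩ ℓ∞ = {T̄, P̄} with P̄ ≠ T̄, and there is a twisted cubic N of PG(4,q) such that the affine points of N are exactly the φ-images of the points of C ∖ {T̄}, N meets Σ∞ in a single point lying on the spread line [T], and the extension of N to PG(4,q²) contains the point P of g and the point P^q of g^q (so N is a g-special twisted cubic). -/

import Mathlib

open scoped Classical
open Matrix

noncomputable section

namespace BaerConics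

/-- Points of the projective space `PG(n-1, K)` as projectivization of `Fin n → K`. -/
abbrev PP (K : Type) [Field K] (n : ℕ) : Type := Projectivization K (Fin n → K)

variable {K : Type} [Field K] {m n : ℕ}

/-- The (at most one) projective point determined by a vector:  empty if `v = 0`,
and the singleton `{[v]}` otherwise. -/
def projPt (v : Fin n → K) : Set (PP K n) :=
  {p | ∃ h : v ≠ 0, p = Projectivization.mk K v h}

/-- The set of projective points lying in a linear subspace. -/
def ptsOf (W : Submodule K (Fin n → K)) : Set (PP K n) :=
  {p | p.rep ∈ W}

/-- The projective line through two points (as the set of points of the span). -/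
def lineTh (P Q : PP K n) : Set (PP K n) :=
  ptsOf (Submodule.span K {P.rep, Q.rep})

/-- `X` is a projective flat of projective dimension `d`. -/
def IsFlat (d : ℕ) (X : Set (PP K n)) : Prop :=
  ∃ W : Submodule K (Fin n → K), Module.finrank K W = d + 1 ∧ X = ptsOf W

/-- Image of a set of vectors under the projective map induced by a matrix. -/
def mimg (M : Matrix (Fin m) (Fin n) K) (X : Set (Fin n → K)) : Set (PP K m) :=
  {p | ∃ v ∈ X, p ∈ projPt (M.mulVec v)}

/-- Coordinatewise application of a ring homomorphism to a vector. -/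
def mapVec {L : Type} [Field L] (σ : K →+* L) (v : Fin n → K) : Fin n → L :=
  fun i => σ (v i)

lemma mulVec_inj (M : Matrix (Fin n) (Fin n) K) (hM : IsUnit M.det) :
    Function.Injective M.mulVec := by
  intro a b hab
  have h := congrArg (fun v => M⁻¹.mulVec v) hab
  simpa [Matrix.mulVec_mulVec, Matrix.nonsing_inv_mul M hM] using h

/-- The projective transformation induced by an invertible matrix. -/
def pmap (M : Matrix (Fin n) (Fin n) K) (hM : IsUnit M.det) (p : PP K n) : PP K n :=
  Projectivization.mk K (M.mulVec p.rep) (by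
    intro h
    apply p.rep_nonzero
    have h0 : M.mulVec p.rep = M.mulVec 0 := by simpa [Matrix.mulVec_zero] using h
    exact mulVec_inj M hM h0)

/-- The map induced on projective points by the coordinatewise `q`-power map. -/
def frobPt (q : ℕ) (p : PP K n) : PP K n :=
  Projectivization.mk K (fun i => p.rep i ^ q) (by
    obtain ⟨i, hi⟩ := Function.ne_iff.mp p.rep_nonzero
    intro h
    exact pow_ne_zero q (by simpa using hi) (by simpa using congrFun h i))

/-- The line at infinity `z = 0` of `PG(2, K)`. -/
def linf (K : Type) [Field K] : Set (PP K 3) := {p | p.rep 2 = 0}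

/-- Coordinatewise application of the algebra map to a vector. -/
def algVec (F : Type) {K : Type} [Field F] [Field K] [Algebra F K] {n : ℕ}
    (v : Fin n → F) : Fin n → K := fun i => algebraMap F K (v i)

/-- Vectors representing the points of the standard Baer subline of `ℓ∞`. -/
def sublineVecs (F K : Type) [Field F] [Field K] [Algebra F K] : Set (Fin 3 → K) :=
  {v | ∃ θ : F, v = ![algebraMap F K θ, 1, 0]} ∪ {![1, 0, 0]}

/-- Nonzero vectors representing the points of `ℓ∞`. -/
def linfVecs (K : Type) [Field K] : Set (Fin 3 → K) := {v | v ≠ 0 ∧ v 2 = 0}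

/-- Vectors with all coordinates in (the image of) `F`, representing the canonical
Baer subplane. -/
def subplaneVecs (F K : Type) [Field F] [Field K] [Algebra F K] : Set (Fin 3 → K) :=
  {v | ∃ w : Fin 3 → F, w ≠ 0 ∧ v = algVec F w}

/-- Vectors of the standard conic with parameters in `S`. -/
def conicVecs {K : Type} [Field K] (S : Set K) : Set (Fin 3 → K) :=
  {v | ∃ θ ∈ S, v = ![1, θ, θ ^ 2]} ∪ {![0, 0, 1]}

/-- `b` is a Baer subline of the line `ℓ` of `PG(2,q²)`. -/
def IsBaerSublineOf (F : Type) {K : Type} [Field F] [Field K] [Algebra F K]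
    (b ℓ : Set (PP K 3)) : Prop :=
  ∃ M : Matrix (Fin 3) (Fin 3) K, IsUnit M.det ∧
    ℓ = mimg M (linfVecs K) ∧ b = mimg M (sublineVecs F K)

/-- `B` is a Baer subplane of `PG(2,q²)`. -/
def IsBaerSubplane (F : Type) {K : Type} [Field F] [Field K] [Algebra F K]
    (B : Set (PP K 3)) : Prop :=
  ∃ M : Matrix (Fin 3) (Fin 3) K, IsUnit M.det ∧ B = mimg M (subplaneVecs F K)

/-- `C` is the image under `PGL(3,K)` of the standard conic with parameters in `S`. -/
def IsConicOver {K : Type} [Field K] (S : Set K) (C : Set (PP K 3)) : Prop :=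
  ∃ M : Matrix (Fin 3) (Fin 3) K, IsUnit M.det ∧ C = mimg M (conicVecs S)

/-- An `F_q`-conic of `PG(2,q²)`: a nondegenerate conic of a Baer subplane. -/
def IsFqConic (F : Type) {K : Type} [Field F] [Field K] [Algebra F K]
    (C : Set (PP K 3)) : Prop :=
  IsConicOver (Set.range (algebraMap F K)) C

/-- An `F_{q²}`-conic of `PG(2,q²)`: a nondegenerate conic. -/
def IsFq2Conic {K : Type} [Field K] (C : Set (PP K 3)) : Prop :=
  IsConicOver (Set.univ : Set K) C

/-- `𝒦` is an `ℓ∞`-Baer pencil with vertex `P`. -/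
def IsLinfBaerPencil (F : Type) {K : Type} [Field F] [Field K] [Algebra F K]
    (𝒦 : Set (PP K 3)) (P : PP K 3) : Prop :=
  P ∈ linf K ∧ ∃ ℓ b : Set (PP K 3), IsBaerSublineOf F b ℓ ∧ P ∉ ℓ ∧
    (∃! X, X ∈ b ∩ linf K) ∧ 𝒦 = ⋃ X ∈ b, lineTh P X

/-- `m` is a line of the Baer subplane `B`, with extension (full line) `ℓ`. -/
def IsLineOfExt {K : Type} [Field K] (q : ℕ) (B m ℓ : Set (PP K 3)) : Prop :=
  IsFlat 1 ℓ ∧ m = B ∩ ℓ ∧ m.ncard = q + 1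

/-- `m` is a line of the Baer subplane `B`. -/
def IsLineOf {K : Type} [Field K] (q : ℕ) (B m : Set (PP K 3)) : Prop :=
  ∃ ℓ, IsLineOfExt q B m ℓ

/-- `P` and `Q` are conjugate with respect to the Baer subline `b` of `ℓ∞`. -/
def ConjWrtSubline (F : Type) {K : Type} [Field F] [Field K] [Algebra F K]
    (q : ℕ) (b : Set (PP K 3)) (P Q : PP K 3) : Prop :=
  ∃ (M : Matrix (Fin 3) (Fin 3) K) (hM : IsUnit M.det),
    mimg M (linfVecs K) = linf K ∧ b = mimg M (sublineVecs F K) ∧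
    ∃ P₀ : PP K 3, P = pmap M hM P₀ ∧ Q = pmap M hM (frobPt q P₀)

/-- A representative vector for the point `(δ,1,0)` (resp. `(1,0,0)`) of `ℓ∞`. -/
def ptInfVec {K : Type} [Field K] : Option K → Fin 3 → K
  | some δ => ![δ, 1, 0]
  | none => ![1, 0, 0]

lemma ptInfVec_ne {K : Type} [Field K] (t : Option K) : ptInfVec t ≠ 0 := by
  cases t with
  | none => intro h; have h0 := congrFun h 0; simp [ptInfVec] at h0
  | some δ => intro h; have h0 := congrFun h 1; simp [ptInfVec] at h0

/-- The point of `ℓ∞` with parameter `δ ∈ K ∪ {∞}`. -/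
def ptInf {K : Type} [Field K] (t : Option K) : PP K 3 :=
  Projectivization.mk K (ptInfVec t) (ptInfVec_ne t)

/-- The hyperplane at infinity `z = 0` of `PG(4, F)`. -/
def sinf (F : Type) [Field F] : Set (PP F 5) := {p | p.rep 4 = 0}

/-- Affine coordinates of the Bruck-Bose image of an affine point of `PG(2,q²)`. -/
def bbVec {F K : Type} [Field F] [Field K] (c0 c1 : K → F) (p : PP K 3) : Fin 5 → F :=
  ![c0 (p.rep 0 / p.rep 2), c1 (p.rep 0 / p.rep 2),
    c0 (p.rep 1 / p.rep 2), c1 (p.rep 1 / p.rep 2), 1]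

/-- The Bruck-Bose map (meaningful on affine points of `PG(2,q²)`). -/
def bb {F K : Type} [Field F] [Field K] (c0 c1 : K → F) (p : PP K 3) : PP F 5 :=
  Projectivization.mk F (bbVec c0 c1 p) (by
    intro h
    have h4 := congrFun h 4
    simp [bbVec] at h4)

/-- First spanning vector of the spread line with parameter `δ ∈ K ∪ {∞}`. -/
def spreadV1 {F K : Type} [Field F] [Field K] (c0 c1 : K → F) : Option K → Fin 5 → F
  | some δ => ![c0 δ, c1 δ, 1, 0, 0]
  | none => ![1, 0, 0, 0, 0]

/-- Second spanning vector of the spread line with parameter `δ ∈ K ∪ {∞}`. -/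
def spreadV2 {F K : Type} [Field F] [Field K] (c0 c1 : K → F) (t0 t1 : F) :
    Option K → Fin 5 → F
  | some δ => ![t0 * c1 δ, c0 δ + t1 * c1 δ, 0, 1, 0]
  | none => ![0, 1, 0, 0, 0]

/-- The line of the regular spread `S` with parameter `δ ∈ K ∪ {∞}`. -/
def spreadLine {F K : Type} [Field F] [Field K] (c0 c1 : K → F) (t0 t1 : F)
    (t : Option K) : Set (PP F 5) :=
  ptsOf (Submodule.span F {spreadV1 c0 c1 t, spreadV2 c0 c1 t0 t1 t})

/-- The extension `[T]⋆` of a spread line to `PG(4,q²)`. -/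
def extSpreadLine (F : Type) {K : Type} [Field F] [Field K] [Algebra F K]
    (c0 c1 : K → F) (t0 t1 : F) (t : Option K) : Set (PP K 5) :=
  ptsOf (Submodule.span K
    {algVec F (spreadV1 c0 c1 t), algVec F (spreadV2 c0 c1 t0 t1 t)})

/-- The `K`-extension of an `F`-subspace. -/
def extSub (F : Type) {K : Type} [Field F] [Field K] [Algebra F K] {n : ℕ}
    (W : Submodule F (Fin n → F)) : Submodule K (Fin n → K) :=
  Submodule.span K (algVec F '' (W : Set (Fin n → F)))

def A0v {K : Type} [Field K] (τ : K) (q : ℕ) : Fin 5 → K := ![τ ^ q, -1, 0, 0, 0]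
def A1v {K : Type} [Field K] (τ : K) (q : ℕ) : Fin 5 → K := ![0, 0, τ ^ q, -1, 0]
def B0v {K : Type} [Field K] (τ : K) : Fin 5 → K := ![τ, -1, 0, 0, 0]
def B1v {K : Type} [Field K] (τ : K) : Fin 5 → K := ![0, 0, τ, -1, 0]

/-- The transversal line `g` of the regular spread, in `PG(4,q²)`. -/
def gline {K : Type} [Field K] (τ : K) (q : ℕ) : Set (PP K 5) :=
  ptsOf (Submodule.span K {A0v τ q, A1v τ q})

/-- The conjugate transversal line `g^q` of the regular spread, in `PG(4,q²)`. -/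
def gqline {K : Type} [Field K] (τ : K) : Set (PP K 5) :=
  ptsOf (Submodule.span K {B0v τ, B1v τ})

/-- Representative vector of the point `T = δA₀ + A₁` of `g`. -/
def gptVec {K : Type} [Field K] (τ : K) (q : ℕ) : Option K → Fin 5 → K
  | some δ => δ • A0v τ q + A1v τ q
  | none => A0v τ q

/-- Representative vector of the conjugate point `T^q = δ^q A₀^q + A₁^q` of `g^q`. -/
def gqptVec {K : Type} [Field K] (τ : K) (q : ℕ) : Option K → Fin 5 → K
  | some δ => δ ^ q • B0v τ + B1v τ
  | none => B0v τ

lemma gptVec_ne {K : Type} [Field K] (τ : K) (q : ℕ) (t : Option K) :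
    gptVec τ q t ≠ 0 := by
  cases t with
  | none =>
      intro h
      have := congrFun h 1
      simp [gptVec, A0v] at this
  | some δ =>
      intro h
      have := congrFun h 3
      simp [gptVec, A0v, A1v] at this

lemma gqptVec_ne {K : Type} [Field K] (τ : K) (q : ℕ) (t : Option K) :
    gqptVec τ q t ≠ 0 := by
  cases t with
  | none =>
      intro h
      have := congrFun h 1
      simp [gqptVec, B0v] at this
  | some δ =>
      intro h
      have := congrFun h 3
      simp [gqptVec, B0v, B1v] at this

/-- The point of `g` corresponding to the point of `ℓ∞` with parameter `δ ∈ K ∪ {∞}`. -/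
def gpt {K : Type} [Field K] (τ : K) (q : ℕ) (t : Option K) : PP K 5 :=
  Projectivization.mk K (gptVec τ q t) (gptVec_ne τ q t)

/-- The point of `g^q` conjugate to `gpt τ q t`. -/
def gqpt {K : Type} [Field K] (τ : K) (q : ℕ) (t : Option K) : PP K 5 :=
  Projectivization.mk K (gqptVec τ q t) (gqptVec_ne τ q t)

/-- Evaluation of the quadratic form with matrix `M` at `v`. -/
def qeval {K : Type} [Field K] {n : ℕ} (M : Matrix (Fin n) (Fin n) K) (v : Fin n → K) : K :=
  v ⬝ᵥ M.mulVec v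

/-- Vectors of the standard twisted cubic (inside the hyperplane `x₄ = 0`)
with parameters in `S`. -/
def tcVecs {K : Type} [Field K] (S : Set K) : Set (Fin 5 → K) :=
  {v | ∃ θ ∈ S, v = ![1, θ, θ ^ 2, θ ^ 3, 0]} ∪ {![0, 0, 0, 1, 0]}

/-- Vectors of the standard 4-dimensional normal rational curve with parameters in `S`. -/
def nrcVecs {K : Type} [Field K] (S : Set K) : Set (Fin 5 → K) :=
  {v | ∃ θ ∈ S, v = ![1, θ, θ ^ 2, θ ^ 3, θ ^ 4]} ∪ {![0, 0, 0, 0, 1]}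

/-- `R` is a regulus of `Σ∞` in `PG(4,q)`. -/
def IsRegulus {F : Type} [Field F] (q : ℕ) (R : Set (Set (PP F 5))) : Prop :=
  R.ncard = q + 1 ∧
  (∀ ℓ ∈ R, IsFlat 1 ℓ ∧ ℓ ⊆ sinf F) ∧
  (∀ ℓ ∈ R, ∀ ℓ' ∈ R, ℓ ≠ ℓ' → ℓ ∩ ℓ' = ∅) ∧
  (∀ mℓ : Set (PP F 5), IsFlat 1 mℓ → mℓ ⊆ sinf F →
    (∃ ℓ₁ ∈ R, ∃ ℓ₂ ∈ R, ∃ ℓ₃ ∈ R, ℓ₁ ≠ ℓ₂ ∧ ℓ₁ ≠ ℓ₃ ∧ ℓ₂ ≠ ℓ₃ ∧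
      (mℓ ∩ ℓ₁).Nonempty ∧ (mℓ ∩ ℓ₂).Nonempty ∧ (mℓ ∩ ℓ₃).Nonempty) →
    ∀ ℓ ∈ R, (mℓ ∩ ℓ).Nonempty)

/-!
The Baer subplane of an `F_q`-conic is determined by the conic, so a matrix `M` of the conic is also
one of `B`; choose it with `M (0, 0, 1)` equal to `T̄`. Tangency of `B` says that the third row of
`M` is, up to a scalar, `(-ρ, 1, 0)` with `ρ ∉ F`, so the third coordinate of `M (1, θ, θ²)` is
`θ - ρ` and `P̄` has parameter `ρ`. Multiplying by the conjugate factor `θ - ρ^q` does not change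
the point but makes its last coordinate `F`-rational for `θ ∈ F`, so its Bruck–Bose image is given
by five polynomials of degree at most three in `θ` over `F`, which define the twisted cubic. At
`θ = ρ^q` the projection from one transversal kills the point of the cubic, which therefore lies on
that transversal, and conjugation puts the point with `θ = ρ` on the other one.
-/

section Projective

lemma mk_eq_mk_of_smul_eq {v w : Fin n → K} (hv : v ≠ 0) (hw : w ≠ 0) (c : K) (h : c • w = v) :
    Projectivization.mk K v hv = Projectivization.mk K w hw :=
  (Projectivization.mk_eq_mk_iff' K v w hv hw).2 ⟨c, h⟩

lemma exists_rep_mk_eq_smul (v : Fin n → K) (hv : v ≠ 0) :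
    ∃ a : K, a ≠ 0 ∧ (Projectivization.mk K v hv).rep = a • v := by
  obtain ⟨a, ha⟩ := Projectivization.exists_smul_eq_mk_rep K v hv
  exact ⟨a, a.ne_zero, ha.symm⟩

lemma mk_mem_linf_iff (v : Fin 3 → K) (hv : v ≠ 0) :
    Projectivization.mk K v hv ∈ linf K ↔ v 2 = 0 := by
  obtain ⟨a, ha, h⟩ := exists_rep_mk_eq_smul v hv
  simp [linf, h, ha]

lemma mk_mem_sinf_iff (v : Fin 5 → K) (hv : v ≠ 0) :
    Projectivization.mk K v hv ∈ sinf K ↔ v 4 = 0 := by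
  obtain ⟨a, ha, h⟩ := exists_rep_mk_eq_smul v hv
  simp [sinf, h, ha]

lemma mk_mem_ptsOf {W : Submodule K (Fin n → K)} {v : Fin n → K} (hv : v ≠ 0) (h : v ∈ W) :
    Projectivization.mk K v hv ∈ ptsOf W := by
  obtain ⟨a, -, ha⟩ := exists_rep_mk_eq_smul v hv
  simpa only [ptsOf, Set.mem_ofPred_eq, ha] using W.smul_mem a h

lemma mk_mem_mimg_iff {M : Matrix (Fin m) (Fin n) K} {X : Set (Fin n → K)} {w : Fin m → K}
    (hw : w ≠ 0) :
    Projectivization.mk K w hw ∈ mimg M X ↔ ∃ v ∈ X, ∃ c : K, c ≠ 0 ∧ M *ᵥ v = c • w := by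
  constructor
  · rintro ⟨v, hv, h, e⟩
    obtain ⟨c, hc⟩ := (Projectivization.mk_eq_mk_iff' K _ _ h hw).1 e.symm
    exact ⟨v, hv, c, left_ne_zero_of_smul (hc ▸ h), hc.symm⟩
  · rintro ⟨v, hv, c, hc, e⟩
    have h : M *ᵥ v ≠ 0 := e ▸ smul_ne_zero hc hw
    exact ⟨v, hv, h, (mk_eq_mk_of_smul_eq h hw c e.symm).symm⟩

lemma mimg_mono {X Y : Set (Fin n → K)} (h : X ⊆ Y) (M : Matrix (Fin m) (Fin n) K) :
    mimg M X ⊆ mimg M Y :=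
  fun _ ⟨v, hv, hp⟩ ↦ ⟨v, h hv, hp⟩

lemma mimg_mul {l : ℕ} (M : Matrix (Fin l) (Fin m) K) (N : Matrix (Fin m) (Fin n) K)
    (X : Set (Fin n → K)) : mimg (M * N) X = mimg M ((N *ᵥ ·) '' X) := by
  ext p
  simp only [mimg, Set.mem_ofPred_eq, Set.exists_mem_image, mulVec_mulVec]

lemma mimg_subset_mimg_of_smul_mem {X Y : Set (Fin n → K)}
    (h : ∀ v ∈ X, v ≠ 0 → ∃ c : K, c ≠ 0 ∧ c • v ∈ Y) (M : Matrix (Fin m) (Fin n) K) :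
    mimg M X ⊆ mimg M Y := by
  rintro p ⟨v, hv, hMv, rfl⟩
  obtain ⟨c, hc, hcv⟩ := h v hv (by rintro rfl; exact hMv (mulVec_zero M))
  exact (mk_mem_mimg_iff hMv).2 ⟨c • v, hcv, c, hc, mulVec_smul M c v⟩

lemma mimg_smul {c : K} (hc : c ≠ 0) (M : Matrix (Fin m) (Fin n) K) (X : Set (Fin n → K)) :
    mimg (c • M) X = mimg M X := by
  ext p
  induction p using Projectivization.ind with | _ w hw
  simp only [mk_mem_mimg_iff, smul_mulVec]
  refine exists_congr fun v ↦ and_congr_right fun _ ↦ ⟨?_, ?_⟩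
  · rintro ⟨d, hd, h⟩
    exact ⟨c⁻¹ * d, mul_ne_zero (inv_ne_zero hc) hd, by rw [mul_smul, ← h, inv_smul_smul₀ hc]⟩
  · rintro ⟨d, hd, h⟩
    exact ⟨c * d, mul_ne_zero hc hd, by rw [h, mul_smul]⟩

lemma mulVec_ne_zero {M : Matrix (Fin n) (Fin n) K} (hM : IsUnit M.det) {v : Fin n → K}
    (hv : v ≠ 0) : M *ᵥ v ≠ 0 := fun h ↦
  hv (mulVec_inj M hM (h.trans (mulVec_zero M).symm))

lemma isUnit_det_inv_mul {M N : Matrix (Fin n) (Fin n) K} (hM : IsUnit M.det)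
    (hN : IsUnit N.det) : IsUnit (N⁻¹ * M).det := by
  rw [det_mul]
  exact (isUnit_nonsing_inv_det N hN).mul hM

lemma inv_mul_mulVec_mem_of_mimg_subset {M N : Matrix (Fin n) (Fin n) K} (hM : IsUnit M.det)
    (hN : IsUnit N.det) {X Y : Set (Fin n → K)} (hY : ∀ (c : K), ∀ v ∈ Y, c • v ∈ Y)
    (h : mimg M X ⊆ mimg N Y) {v : Fin n → K} (hv : v ∈ X) (hv0 : v ≠ 0) :
    (N⁻¹ * M) *ᵥ v ∈ Y := by
  obtain ⟨u, hu, c, hc, e⟩ := (mk_mem_mimg_iff (mulVec_ne_zero hM hv0)).1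
    (h ((mk_mem_mimg_iff (mulVec_ne_zero hM hv0)).2 ⟨v, hv, 1, one_ne_zero, (one_smul K _).symm⟩))
  have hu' : u = c • (N⁻¹ * M) *ᵥ v := by
    rw [← mulVec_mulVec, ← mulVec_smul, ← e, mulVec_mulVec, nonsing_inv_mul N hN, one_mulVec]
  rw [← inv_smul_smul₀ hc ((N⁻¹ * M) *ᵥ v), ← hu']
  exact hY _ _ hu

end Projective

section Rational

variable {F : Type} [Field F] [Algebra F K]

/-- The set of `K`-multiples of vectors with coordinates in `F`: the affine cone over the canonical
subgeometry `PG(n-1, F)` of `PG(n-1, K)`. -/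
def rationalCone (F : Type) {K : Type} [Field F] [Field K] [Algebra F K] {n : ℕ} :
    Set (Fin n → K) :=
  {v | ∃ (c : K) (w : Fin n → F), v = c • algVec F w}

lemma algVec_mem_rationalCone (w : Fin n → F) : (algVec F w : Fin n → K) ∈ rationalCone F :=
  ⟨1, w, (one_smul K _).symm⟩

lemma smul_mem_rationalCone (c : K) {v : Fin n → K} (hv : v ∈ rationalCone F) :
    c • v ∈ rationalCone F := by
  obtain ⟨d, w, rfl⟩ := hv
  exact ⟨c * d, w, smul_smul c d _⟩

lemma mapVec_mulVec {L : Type} [Field L] (σ : K →+* L) (A : Matrix (Fin m) (Fin n) K)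
    (v : Fin n → K) : mapVec σ (A *ᵥ v) = A.map σ *ᵥ mapVec σ v :=
  funext fun i ↦ RingHom.map_mulVec σ A v i

lemma mapVec_smul {L : Type} [Field L] (σ : K →+* L) (c : K) (v : Fin n → K) :
    mapVec σ (c • v) = σ c • mapVec σ v :=
  funext fun i ↦ map_mul σ c (v i)

lemma map_mulVec_algVec (W : Matrix (Fin m) (Fin n) F) (v : Fin n → F) :
    W.map (algebraMap F K) *ᵥ algVec F v = algVec F (W *ᵥ v) :=
  (mapVec_mulVec (algebraMap F K) W v).symm

lemma algVec_ne_zero {v : Fin n → F} (hv : v ≠ 0) : (algVec F v : Fin n → K) ≠ 0 := fun h ↦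
  hv (funext fun i ↦ (map_eq_zero (algebraMap F K)).1 (congrFun h i))

lemma isUnit_det_map_iff {W : Matrix (Fin n) (Fin n) F} :
    IsUnit (W.map (algebraMap F K)).det ↔ IsUnit W.det := by
  rw [← RingHom.mapMatrix_apply, ← RingHom.map_det, isUnit_map_iff]

lemma mimg_subplaneVecs (M : Matrix (Fin m) (Fin 3) K) :
    mimg M (subplaneVecs F K) = mimg M (rationalCone F) := by
  refine (mimg_mono ?_ M).antisymm (mimg_subset_mimg_of_smul_mem ?_ M)
  · rintro _ ⟨w, -, rfl⟩
    exact algVec_mem_rationalCone w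
  · rintro _ ⟨c, w, rfl⟩ h
    have hc : c ≠ 0 := by rintro rfl; exact h (zero_smul K _)
    refine ⟨c⁻¹, inv_ne_zero hc, w, ?_, inv_smul_smul₀ hc _⟩
    rintro rfl
    exact h (by simp [algVec, funext_iff])

lemma exists_eq_smul_map_of_frame {A : Matrix (Fin n) (Fin n) K} (hA : IsUnit A.det)
    (hcol : ∀ j, A.col j ∈ rationalCone F) {a : Fin n → F} (ha : ∀ j, a j ≠ 0)
    (hunit : A *ᵥ algVec F a ∈ rationalCone F) :
    ∃ (c : K) (W : Matrix (Fin n) (Fin n) F), A = c • W.map (algebraMap F K) := by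
  choose l w hw using hcol
  obtain ⟨c, b, hb⟩ := hunit
  set W : Matrix (Fin n) (Fin n) F := of fun i j ↦ w j i
  have hAW : A = W.map (algebraMap F K) * diagonal l := by
    ext i j
    simpa [W, algVec, mul_comm] using congrFun (hw j) i
  have hWK : IsUnit (W.map (algebraMap F K)).det := by
    rw [hAW, det_mul] at hA
    exact isUnit_of_mul_isUnit_left hA
  have hWb : W *ᵥ (W⁻¹ *ᵥ b) = b := by
    rw [mulVec_mulVec, mul_nonsing_inv W (isUnit_det_map_iff.1 hWK), one_mulVec]
  have hl : diagonal l *ᵥ algVec F a = c • algVec F (W⁻¹ *ᵥ b) := by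
    apply mulVec_inj _ hWK
    rw [mulVec_mulVec, ← hAW, hb, mulVec_smul, map_mulVec_algVec, hWb]
  refine ⟨c, W * diagonal fun j ↦ (W⁻¹ *ᵥ b) j / a j, ?_⟩
  rw [hAW]
  ext i j
  have haj : algebraMap F K (a j) ≠ 0 := by simpa using ha j
  have hlj : l j * algebraMap F K (a j) = c * algebraMap F K ((W⁻¹ *ᵥ b) j) := by
    simpa [mulVec_diagonal, algVec] using congrFun hl j
  simp only [mul_diagonal, map_apply, Matrix.smul_apply, smul_eq_mul, map_mul, map_div₀]
  field_simp
  linear_combination algebraMap F K (W i j) * hlj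

end Rational

section Conic

/-- The affine cone over the standard conic `{(1, θ, θ²)} ∪ {(0, 0, 1)}`. -/
def conicCone (K : Type) [Field K] : Set (Fin 3 → K) := {v | v 1 ^ 2 = v 0 * v 2}

/-- The matrix of the quadratic form `v₁² - v₀ v₂`, whose zeros are the points of the standard
conic; it is not chosen symmetric, so that characteristic two needs no special treatment. -/
def conicForm (K : Type) [Field K] : Matrix (Fin 3) (Fin 3) K := !![0, 0, -1; 0, 1, 0; 0, 0, 0]

lemma qeval_conicForm (v : Fin 3 → K) : qeval (conicForm K) v = v 1 ^ 2 - v 0 * v 2 := by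
  simp only [qeval, conicForm, vec3_dotProduct, mulVec, of_apply, cons_val]
  ring

lemma mem_conicCone_iff {v : Fin 3 → K} : v ∈ conicCone K ↔ qeval (conicForm K) v = 0 := by
  rw [qeval_conicForm, sub_eq_zero]
  rfl

lemma qeval_mulVec (Q : Matrix (Fin m) (Fin m) K) (A : Matrix (Fin m) (Fin n) K)
    (v : Fin n → K) : qeval Q (A *ᵥ v) = qeval (Aᵀ * Q * A) v := by
  simp only [qeval, ← mulVec_mulVec, dotProduct_mulVec v Aᵀ, vecMul_transpose]

lemma smul_mem_conicCone (c : K) {v : Fin 3 → K} (hv : v ∈ conicCone K) : c • v ∈ conicCone K := by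
  have h : v 1 ^ 2 = v 0 * v 2 := hv
  change (c * v 1) ^ 2 = c * v 0 * (c * v 2)
  linear_combination c ^ 2 * h

lemma veronese_mem_conicCone (θ : K) : ![1, θ, θ ^ 2] ∈ conicCone K := (one_mul _).symm

lemma e₂_mem_conicCone : ![0, 0, 1] ∈ conicCone K := by simp [conicCone]

section Subfield

variable {F : Type} [Field F] [Algebra F K]

lemma algVec_veronese (θ : F) :
    (algVec F ![1, θ, θ ^ 2] : Fin 3 → K) = ![1, algebraMap F K θ, algebraMap F K θ ^ 2] := by
  ext i
  fin_cases i <;> simp [algVec]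

lemma algVec_e₂ : (algVec F ![0, 0, 1] : Fin 3 → K) = ![0, 0, 1] := by
  ext i
  fin_cases i <;> simp [algVec]

lemma conicVecs_range_subset :
    conicVecs (Set.range (algebraMap F K)) ⊆ algVec F '' conicCone F := by
  rintro _ (⟨_, ⟨θ, rfl⟩, rfl⟩ | rfl)
  exacts [⟨_, veronese_mem_conicCone θ, algVec_veronese θ⟩, ⟨_, e₂_mem_conicCone, algVec_e₂⟩]

lemma exists_smul_mem_conicVecs {v : Fin 3 → F} (hv : v ∈ conicCone F) (hv0 : v ≠ 0) :
    ∃ c : K, c ≠ 0 ∧ c • algVec F v ∈ conicVecs (Set.range (algebraMap F K)) := by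
  have hcone : v 1 ^ 2 = v 0 * v 2 := hv
  by_cases h0 : v 0 = 0
  · have h1 : v 1 = 0 := by simpa [h0] using hcone
    have h2 : v 2 ≠ 0 := fun h2 ↦ hv0 (by ext i; fin_cases i <;> assumption)
    refine ⟨(algebraMap F K (v 2))⁻¹, by simpa using h2, .inr ?_⟩
    ext i
    fin_cases i <;> simp [algVec, h0, h1, h2]
  · refine ⟨(algebraMap F K (v 0))⁻¹, by simpa using h0, .inl ⟨_, ⟨v 1 / v 0, rfl⟩, ?_⟩⟩
    have h2 : v 2 / v 0 = (v 1 / v 0) ^ 2 := by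
      field_simp
      linear_combination -hcone
    have h2K := congrArg (algebraMap F K) h2
    ext i
    fin_cases i
    · simp [algVec, h0]
    · simp [algVec, div_eq_inv_mul]
    · simpa [algVec, div_eq_inv_mul] using h2K

lemma mimg_conicVecs_range (M : Matrix (Fin m) (Fin 3) K) :
    mimg M (conicVecs (Set.range (algebraMap F K))) = mimg M (algVec F '' conicCone F) := by
  refine (mimg_mono conicVecs_range_subset M).antisymm (mimg_subset_mimg_of_smul_mem ?_ M)
  rintro _ ⟨v, hv, rfl⟩ h
  exact exists_smul_mem_conicVecs hv (by rintro rfl; exact h (by simp [algVec, funext_iff]))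

end Subfield

lemma mimg_conicVecs_univ (M : Matrix (Fin m) (Fin 3) K) :
    mimg M (conicVecs Set.univ) = mimg M (conicCone K) := by
  have hid : (algVec K : (Fin 3 → K) → Fin 3 → K) = id := rfl
  simpa [hid] using mimg_conicVecs_range (F := K) M

end Conic

section ConicUniqueness

variable {F : Type} [Field F] [Algebra F K]

/-- On `(1, θ, θ²)` a quadratic form is a quartic in `θ`, whose leading coefficient is its value at
`(0, 0, 1)`; so four parameters are enough to kill it. -/
lemma exists_qeval_eq_mul_qeval_conicForm (f : Fin 4 ↪ F) (Q : Matrix (Fin 3) (Fin 3) K)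
    (hQ : ∀ v ∈ conicCone F, qeval Q (algVec F v) = 0) :
    ∃ b : K, ∀ v, qeval Q v = b * qeval (conicForm K) v := by
  have hexpand (v : Fin 3 → K) : qeval Q v = Q 0 0 * v 0 ^ 2 + (Q 0 1 + Q 1 0) * (v 0 * v 1) +
      (Q 0 2 + Q 2 0) * (v 0 * v 2) + Q 1 1 * v 1 ^ 2 + (Q 1 2 + Q 2 1) * (v 1 * v 2) +
      Q 2 2 * v 2 ^ 2 := by
    simp only [qeval, vec3_dotProduct, mulVec]
    ring
  have hlead : Q 2 2 = 0 := by
    have h := hQ _ e₂_mem_conicCone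
    rw [algVec_e₂, hexpand] at h
    simpa using h
  have hcubic : ![Q 0 0, Q 0 1 + Q 1 0, Q 0 2 + Q 2 0 + Q 1 1, Q 1 2 + Q 2 1] = 0 := by
    refine eq_zero_of_forall_index_sum_pow_mul_eq_zero
      ((algebraMap F K).injective.comp f.injective) fun j ↦ ?_
    have h := hQ _ (veronese_mem_conicCone (f j))
    rw [algVec_veronese, hexpand] at h
    simp only [cons_val] at h
    simp only [Fin.sum_univ_four, cons_val, Fin.coe_ofNat_eq_mod, Function.comp_apply]
    linear_combination h - algebraMap F K (f j) ^ 4 * hlead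
  obtain ⟨h0, h1, h2, h3⟩ : Q 0 0 = 0 ∧ Q 0 1 + Q 1 0 = 0 ∧ Q 0 2 + Q 2 0 + Q 1 1 = 0 ∧
      Q 1 2 + Q 2 1 = 0 := by
    simpa [Fin.forall_fin_succ] using congrFun hcubic
  refine ⟨Q 1 1, fun v ↦ ?_⟩
  rw [hexpand, qeval_conicForm]
  linear_combination v 0 ^ 2 * h0 + v 0 * v 1 * h1 + v 0 * v 2 * h2 + v 1 * v 2 * h3 +
    v 2 ^ 2 * hlead

lemma image_conicCone_eq_of_qeval {A : Matrix (Fin 3) (Fin 3) K} (hA : IsUnit A.det) {b : K}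
    (hb : b ≠ 0) (h : ∀ v, qeval (conicForm K) (A *ᵥ v) = b * qeval (conicForm K) v) :
    (A *ᵥ ·) '' conicCone K = conicCone K := by
  have hsurj : Function.Surjective A.mulVec :=
    mulVec_surjective_iff_isUnit.2 ((isUnit_iff_isUnit_det A).2 hA)
  have hpre : A.mulVec ⁻¹' conicCone K = conicCone K := Set.ext fun v ↦ by
    rw [Set.mem_preimage, mem_conicCone_iff, mem_conicCone_iff, h, mul_eq_zero, or_iff_right hb]
  exact (congrArg _ hpre.symm).trans (Set.image_preimage_eq (conicCone K) hsurj)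

lemma image_conicCone_eq_of_mulVec_algVec_mem {A : Matrix (Fin 3) (Fin 3) K}
    (hA : IsUnit A.det) (f : Fin 4 ↪ F) (h : ∀ v ∈ conicCone F, A *ᵥ algVec F v ∈ conicCone K) :
    (A *ᵥ ·) '' conicCone K = conicCone K := by
  obtain ⟨b, hb⟩ := exists_qeval_eq_mul_qeval_conicForm f (Aᵀ * conicForm K * A) fun v hv ↦ by
    rw [← qeval_mulVec]
    exact mem_conicCone_iff.1 (h v hv)
  simp only [← qeval_mulVec] at hb
  refine image_conicCone_eq_of_qeval hA ?_ hb
  rintro rfl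
  obtain ⟨v, hv⟩ := mulVec_surjective_iff_isUnit.2 ((isUnit_iff_isUnit_det A).2 hA) ![0, 1, 0]
  simpa [hv, qeval_conicForm] using hb v

theorem mimg_conicVecs_univ_eq_of_range_subset {M N : Matrix (Fin 3) (Fin 3) K} (hM : IsUnit M.det)
    (hN : IsUnit N.det) (f : Fin 4 ↪ F)
    (h : mimg M (conicVecs (Set.range (algebraMap F K))) ⊆ mimg N (conicVecs Set.univ)) :
    mimg N (conicVecs Set.univ) = mimg M (conicVecs (Set.univ : Set K)) := by
  rw [mimg_conicVecs_range, mimg_conicVecs_univ] at h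
  have hcone : ∀ v ∈ conicCone F, (N⁻¹ * M) *ᵥ algVec F v ∈ conicCone K := fun v hv ↦ by
    by_cases hv0 : algVec F v = (0 : Fin 3 → K)
    · simp [hv0, conicCone]
    · exact inv_mul_mulVec_mem_of_mimg_subset hM hN (fun c _ hv ↦ smul_mem_conicCone c hv) h
        ⟨v, hv, rfl⟩ hv0
  rw [mimg_conicVecs_univ, mimg_conicVecs_univ, ← mul_nonsing_inv_cancel_left N M hN, mimg_mul,
    image_conicCone_eq_of_mulVec_algVec_mem (isUnit_det_inv_mul hM hN) f hcone]

end ConicUniqueness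

section Subplane

variable {F : Type} [Field F] [Algebra F K]

lemma mulVec_mem_rationalCone_of_conic {A : Matrix (Fin 3) (Fin 3) K} (hA : IsUnit A.det)
    (hF : 3 ≤ ENat.card F) (h : ∀ v ∈ conicCone F, A *ᵥ algVec F v ∈ rationalCone F)
    {u : Fin 3 → K} (hu : u ∈ rationalCone F) : A *ᵥ u ∈ rationalCone F := by
  obtain ⟨t, ht0, ht1⟩ := ENat.exists_ne_ne_of_three_le hF 0 1
  -- The columns of `P`, together with `(1, t, t²)`, form a frame of four points of the conic.
  let P : Matrix (Fin 3) (Fin 3) F := !![1, 0, 1; 0, 0, 1; 0, 1, 1]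
  have hP : IsUnit P.det := by simp [P, det_fin_three]
  have hcone : ∀ w : Fin 3 → F, P *ᵥ w ∈ conicCone F →
      (A * P.map (algebraMap F K)) *ᵥ algVec F w ∈ rationalCone F := fun w hw ↦ by
    rw [← mulVec_mulVec, map_mulVec_algVec]
    exact h _ hw
  obtain ⟨c, W, hW⟩ := exists_eq_smul_map_of_frame (A := A * P.map (algebraMap F K))
    (a := ![1 - t, t ^ 2 - t, t]) (by rw [det_mul]; exact hA.mul (isUnit_det_map_iff.2 hP))
    (fun j ↦ by
      have hj : (algVec F (Pi.single j 1) : Fin 3 → K) = Pi.single j 1 := by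
        ext i
        simp [algVec, Pi.single_apply, apply_ite]
      rw [← mulVec_single_one, ← hj]
      apply hcone
      rw [mulVec_single_one]
      fin_cases j <;> simp [P, conicCone])
    (by
      have ht : t ^ 2 - t ≠ 0 := by
        rw [pow_two, ← mul_sub_one]
        exact mul_ne_zero ht0 (sub_ne_zero.2 ht1)
      simp [Fin.forall_fin_succ, ht0, ht, sub_ne_zero.2 ht1.symm])
    (hcone _ (by simp [P, conicCone]))
  obtain ⟨d, w, rfl⟩ := hu
  have hPw : algVec F w = P.map (algebraMap F K) *ᵥ algVec F (P⁻¹ *ᵥ w) := by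
    rw [map_mulVec_algVec, mulVec_mulVec, mul_nonsing_inv P hP, one_mulVec]
  rw [mulVec_smul, hPw, mulVec_mulVec, hW, smul_mulVec, map_mulVec_algVec]
  exact smul_mem_rationalCone d (smul_mem_rationalCone c (algVec_mem_rationalCone _))

theorem mimg_subplaneVecs_subset_of_conic_subset {M N : Matrix (Fin 3) (Fin 3) K}
    (hM : IsUnit M.det) (hN : IsUnit N.det) (hF : 3 ≤ ENat.card F)
    (h : mimg M (conicVecs (Set.range (algebraMap F K))) ⊆ mimg N (subplaneVecs F K)) :
    mimg M (subplaneVecs F K) ⊆ mimg N (subplaneVecs F K) := by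
  rw [mimg_conicVecs_range, mimg_subplaneVecs] at h
  rw [mimg_subplaneVecs, mimg_subplaneVecs, ← mul_nonsing_inv_cancel_left N M hN, mimg_mul]
  apply mimg_mono
  rintro _ ⟨u, hu, rfl⟩
  refine mulVec_mem_rationalCone_of_conic (isUnit_det_inv_mul hM hN) hF (fun v hv ↦ ?_) hu
  by_cases hv0 : v = 0
  · exact ⟨0, 0, by simp [hv0, algVec, funext_iff, mulVec, dotProduct]⟩
  · exact inv_mul_mulVec_mem_of_mimg_subset hM hN (fun c _ hv ↦ smul_mem_rationalCone c hv) h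
      ⟨v, hv, rfl⟩ (algVec_ne_zero hv0)

lemma exists_mimg_conic_eq_of_veronese {M : Matrix (Fin 3) (Fin 3) K} (hM : IsUnit M.det) (t : F) :
    ∃ M' : Matrix (Fin 3) (Fin 3) K, IsUnit M'.det ∧
      mimg M' (algVec F '' conicCone F) = mimg M (algVec F '' conicCone F) ∧
      M' *ᵥ ![0, 0, 1] = M *ᵥ algVec F ![1, t, t ^ 2] := by
  -- `R` acts on the parameters of the conic by `θ ↦ t + θ⁻¹`.
  let R : Matrix (Fin 3) (Fin 3) F := !![0, 0, 1; 0, 1, t; 1, 2 * t, t ^ 2]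
  have hR : IsUnit R.det := by simp [R, det_fin_three]
  have hcone : (R *ᵥ ·) '' conicCone F = conicCone F := by
    refine image_conicCone_eq_of_qeval hR one_ne_zero fun v ↦ ?_
    simp only [qeval_conicForm, R, mulVec, vec3_dotProduct, of_apply, cons_val]
    ring
  refine ⟨M * R.map (algebraMap F K), ?_, ?_, ?_⟩
  · rw [det_mul]
    exact hM.mul (isUnit_det_map_iff.2 hR)
  · rw [mimg_mul, Set.image_image]
    simp only [map_mulVec_algVec]
    rw [← Set.image_image (algVec F) (R *ᵥ ·), hcone]
  · rw [← algVec_e₂ (F := F), ← mulVec_mulVec, map_mulVec_algVec]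
    congr 2
    ext i
    fin_cases i <;> simp [R, mulVec]

lemma exists_mimg_conic_eq_of_mem {M : Matrix (Fin 3) (Fin 3) K} (hM : IsUnit M.det)
    {w : Fin 3 → K} {hw : w ≠ 0}
    (h : Projectivization.mk K w hw ∈ mimg M (conicVecs (Set.range (algebraMap F K)))) :
    ∃ M' : Matrix (Fin 3) (Fin 3) K, IsUnit M'.det ∧
      mimg M' (conicVecs (Set.range (algebraMap F K))) =
        mimg M (conicVecs (Set.range (algebraMap F K))) ∧
      ∃ c : K, c ≠ 0 ∧ M' *ᵥ ![0, 0, 1] = c • w := by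
  obtain ⟨_, ⟨_, ⟨t, rfl⟩, rfl⟩ | rfl, c, hc, e⟩ := (mk_mem_mimg_iff hw).1 h
  · obtain ⟨M', hM', hmimg, he⟩ := exists_mimg_conic_eq_of_veronese (F := F) hM t
    refine ⟨M', hM', by rwa [mimg_conicVecs_range, mimg_conicVecs_range], c, hc, ?_⟩
    rw [he, algVec_veronese, e]
  · exact ⟨M, hM, rfl, c, hc, e⟩

end Subplane

section Infinity

lemma exists_eq_smul_ptInfVec {v : Fin 3 → K} (hv : v ≠ 0) (h2 : v 2 = 0) :
    ∃ (t : Option K) (c : K), c ≠ 0 ∧ v = c • ptInfVec t := by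
  by_cases h1 : v 1 = 0
  · refine ⟨none, v 0, fun h0 ↦ hv ?_, ?_⟩ <;> ext i <;> fin_cases i <;> simp_all [ptInfVec]
  · refine ⟨some (v 0 / v 1), v 1, h1, ?_⟩
    ext i
    fin_cases i <;> simp [ptInfVec, h2, mul_div_cancel₀, h1]

lemma ptInf_mem_linf (t : Option K) : ptInf t ∈ linf K :=
  (mk_mem_linf_iff _ _).2 (by cases t <;> simp [ptInfVec])

lemma ptInf_eq_mk {v : Fin 3 → K} (hv : v ≠ 0) {t : Option K} {c : K} (h : v = c • ptInfVec t) :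
    ptInf t = Projectivization.mk K v hv :=
  (mk_eq_mk_of_smul_eq hv (ptInfVec_ne t) c h.symm).symm

variable {F : Type} [Field F] [Algebra F K]

lemma eq_zero_of_mulVec_algVec_mem_linf {M : Matrix (Fin 3) (Fin 3) K} (hM : IsUnit M.det)
    {t : Option K} (hsub : mimg M (subplaneVecs F K) ∩ linf K ⊆ {ptInf t}) {c : K}
    (hMt : M *ᵥ ![0, 0, 1] = c • ptInfVec t) {u : Fin 3 → F} (hu : (M *ᵥ algVec F u) 2 = 0) :
    u 0 = 0 ∧ u 1 = 0 := by
  by_cases hu0 : u = 0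
  · simp [hu0]
  have hMu : M *ᵥ algVec F u ≠ 0 := mulVec_ne_zero hM (algVec_ne_zero hu0)
  have he : M *ᵥ ![0, 0, 1] ≠ 0 := mulVec_ne_zero hM (by simp)
  have hmem : Projectivization.mk K _ hMu ∈ mimg M (subplaneVecs F K) ∩ linf K :=
    ⟨⟨_, ⟨u, hu0, rfl⟩, hMu, rfl⟩, (mk_mem_linf_iff _ hMu).2 hu⟩
  have hpt : Projectivization.mk K _ hMu = Projectivization.mk K _ he :=
    (hsub hmem).trans (ptInf_eq_mk he hMt)
  obtain ⟨d, hd⟩ := (Projectivization.mk_eq_mk_iff' K _ _ hMu he).1 hpt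
  have hdu : (d • ![0, 0, 1] : Fin 3 → K) = algVec F u :=
    mulVec_inj M hM (by rw [mulVec_smul, hd])
  constructor
  · simpa [algVec] using (congrFun hdu 0).symm
  · simpa [algVec] using (congrFun hdu 1).symm

lemma exists_smul_row_eq {M : Matrix (Fin 3) (Fin 3) K} (hM : (M *ᵥ ![0, 0, 1]) 2 = 0)
    (htan : ∀ u : Fin 3 → F, (M *ᵥ algVec F u) 2 = 0 → u 0 = 0 ∧ u 1 = 0) :
    ∃ c ρ : K, c ≠ 0 ∧ ρ ∉ Set.range (algebraMap F K) ∧ (c • M) 2 = ![-ρ, 1, 0] := by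
  have hrow (v : Fin 3 → K) : (M *ᵥ v) 2 = M 2 0 * v 0 + M 2 1 * v 1 + M 2 2 * v 2 :=
    vec3_dotProduct _ _
  have h22 : M 2 2 = 0 := by
    rw [hrow] at hM
    simpa using hM
  have h21 : M 2 1 ≠ 0 := fun h21 ↦ by
    simpa using htan ![0, 1, 0] (by simp [hrow, algVec, h21])
  refine ⟨(M 2 1)⁻¹, -(M 2 0 / M 2 1), inv_ne_zero h21, ?_, ?_⟩
  · rintro ⟨θ, hθ⟩
    have h : (M *ᵥ algVec F ![1, θ, 0]) 2 = 0 := by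
      simp only [hrow, algVec, cons_val, map_one, map_zero, hθ]
      field_simp
      ring
    simpa using htan _ h
  · ext j
    fin_cases j <;> simp [h21, h22, div_eq_inv_mul]

theorem exists_conic_matrix_of_tangent (hF : 3 ≤ ENat.card F) {B C : Set (PP K 3)}
    (hB : IsBaerSubplane F B) {t : Option K} (hT : B ∩ linf K = {ptInf t}) (hC : IsFqConic F C)
    (hCB : C ⊆ B) (hTC : ptInf t ∈ C) :
    ∃ (M : Matrix (Fin 3) (Fin 3) K) (ρ κ : K), IsUnit M.det ∧
      C = mimg M (conicVecs (Set.range (algebraMap F K))) ∧ ρ ∉ Set.range (algebraMap F K) ∧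
      M 2 = ![-ρ, 1, 0] ∧ M *ᵥ ![0, 0, 1] = κ • ptInfVec t := by
  obtain ⟨N, hN, rfl⟩ := hB
  obtain ⟨M₀, hM₀, rfl⟩ := hC
  obtain ⟨M, hM, hconic, c, -, he⟩ := exists_mimg_conic_eq_of_mem hM₀ hTC
  have hsub : mimg M (subplaneVecs F K) ∩ linf K ⊆ {ptInf t} := by
    rw [← hT]
    exact Set.inter_subset_inter_left _
      (mimg_subplaneVecs_subset_of_conic_subset hM hN hF (hconic.trans_subset hCB))
  have h2 : (M *ᵥ ![0, 0, 1]) 2 = 0 := by rw [he]; cases t <;> simp [ptInfVec]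
  obtain ⟨d, ρ, hd, hρ, hrow⟩ := exists_smul_row_eq h2 fun u ↦
    eq_zero_of_mulVec_algVec_mem_linf hM hsub he (u := u)
  refine ⟨d • M, ρ, d * c, ?_, by rw [mimg_smul hd, hconic], hρ, hrow, ?_⟩
  · rw [det_smul]
    exact ((IsUnit.mk0 d hd).pow _).mul hM
  · rw [smul_mulVec, he, smul_smul]

lemma mulVec_two_of_row_eq {M : Matrix (Fin 3) (Fin 3) K} {ρ : K} (hrow : M 2 = ![-ρ, 1, 0])
    (θ : K) : (M *ᵥ ![1, θ, θ ^ 2]) 2 = θ - ρ := by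
  simp only [mulVec, hrow, vec3_dotProduct, cons_val]
  ring

theorem exists_mimg_conicVecs_univ_inter_linf {M : Matrix (Fin 3) (Fin 3) K} (hM : IsUnit M.det)
    {ρ κ : K} {t : Option K} (hrow : M 2 = ![-ρ, 1, 0]) (he : M *ᵥ ![0, 0, 1] = κ • ptInfVec t) :
    ∃ (s : Option K) (c : K), c ≠ 0 ∧ M *ᵥ ![1, ρ, ρ ^ 2] = c • ptInfVec s ∧
      ptInf s ≠ ptInf t ∧ mimg M (conicVecs Set.univ) ∩ linf K = {ptInf t, ptInf s} := by
  have hρ : M *ᵥ ![1, ρ, ρ ^ 2] ≠ 0 := mulVec_ne_zero hM (by simp)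
  have he0 : M *ᵥ ![0, 0, 1] ≠ 0 := mulVec_ne_zero hM (by simp)
  obtain ⟨s, c, hc, hs⟩ := exists_eq_smul_ptInfVec hρ (by simp [mulVec_two_of_row_eq hrow])
  have hspt := ptInf_eq_mk hρ hs
  have htpt := ptInf_eq_mk he0 he
  refine ⟨s, c, hc, hs, ?_, Set.Subset.antisymm ?_ ?_⟩
  · rw [hspt, htpt, Ne, Projectivization.mk_eq_mk_iff']
    rintro ⟨d, hd⟩
    rw [← mulVec_smul] at hd
    simpa using congrFun (mulVec_inj M hM hd) 0
  · rintro p ⟨⟨_, ⟨θ, -, rfl⟩ | rfl, h, rfl⟩, hp⟩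
    · rw [mk_mem_linf_iff, mulVec_two_of_row_eq hrow, sub_eq_zero] at hp
      subst hp
      exact .inr hspt.symm
    · exact .inl htpt.symm
  · rintro p (rfl | rfl)
    · exact ⟨⟨_, .inr rfl, he0, htpt⟩, ptInf_mem_linf t⟩
    · exact ⟨⟨_, .inl ⟨ρ, trivial, rfl⟩, hρ, hspt⟩, ptInf_mem_linf s⟩

end Infinity

section QuadraticExtension

variable {F : Type} [Field F] [Algebra F K] {τ : K} {t0 t1 : F} {c0 c1 : K → F} {σ : K →ₐ[F] K}

lemma conj_generator_eq (hτ : τ ^ 2 = algebraMap F K t1 * τ + algebraMap F K t0)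
    (hσ : σ τ ≠ τ) : σ τ = algebraMap F K t1 - τ := by
  have hστ : σ τ ^ 2 = algebraMap F K t1 * σ τ + algebraMap F K t0 := by
    simpa using congrArg σ hτ
  apply mul_left_cancel₀ (sub_ne_zero.2 hσ)
  linear_combination hστ - hτ

lemma conj_eq (hc : ∀ x : K, x = algebraMap F K (c0 x) + algebraMap F K (c1 x) * τ) (x : K) :
    σ x = algebraMap F K (c0 x) + algebraMap F K (c1 x) * σ τ := by
  simpa using congrArg σ (hc x)

lemma conj_conj (hτ : τ ^ 2 = algebraMap F K t1 * τ + algebraMap F K t0) (hσ : σ τ ≠ τ)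
    (hc : ∀ x : K, x = algebraMap F K (c0 x) + algebraMap F K (c1 x) * τ) (x : K) :
    σ (σ x) = x := by
  rw [conj_eq hc x]
  simp only [map_add, map_mul, AlgHom.commutes, conj_generator_eq hτ hσ, map_sub, sub_sub_cancel]
  exact (hc x).symm

lemma mem_range_of_conj_eq (hc : ∀ x : K, x = algebraMap F K (c0 x) + algebraMap F K (c1 x) * τ)
    (hσ : σ τ ≠ τ) {x : K} (hx : σ x = x) : x ∈ Set.range (algebraMap F K) := by
  have h : algebraMap F K (c1 x) * (σ τ - τ) = 0 := by
    linear_combination hx - conj_eq (σ := σ) hc x + hc x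
  have h1 : algebraMap F K (c1 x) = 0 := (mul_eq_zero.1 h).resolve_right (sub_ne_zero.2 hσ)
  exact ⟨c0 x, by linear_combination -(hc x) - τ * h1⟩

lemma conj_notMem_range (hτ : τ ^ 2 = algebraMap F K t1 * τ + algebraMap F K t0) (hσ : σ τ ≠ τ)
    (hc : ∀ x : K, x = algebraMap F K (c0 x) + algebraMap F K (c1 x) * τ) {x : K}
    (hx : x ∉ Set.range (algebraMap F K)) : σ x ∉ Set.range (algebraMap F K) := by
  rintro ⟨a, ha⟩
  exact hx ⟨a, by rw [← conj_conj hτ hσ hc x, ← ha, AlgHom.commutes]⟩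

lemma mapVec_algVec (v : Fin n → F) : mapVec (σ : K →+* K) (algVec F v) = algVec F v :=
  funext fun i ↦ σ.commutes (v i)

lemma mapVec_map_mulVec (W : Matrix (Fin m) (Fin n) F) (v : Fin n → K) :
    mapVec (σ : K →+* K) (W.map (algebraMap F K) *ᵥ v) =
      W.map (algebraMap F K) *ᵥ mapVec (σ : K →+* K) v := by
  rw [mapVec_mulVec]
  congr 1
  ext i j
  exact σ.commutes (W i j)

end QuadraticExtension

section BruckBose

/-- For `s = τ` the linear map `(x₀, x₁, y₀, y₁, z) ↦ (x₀ + x₁ τ, y₀ + y₁ τ, z)` inverting the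
Bruck–Bose map; its extension to `PG(4, q²)` is the projection from a transversal line, and
replacing `τ` by its conjugate gives the projection from the conjugate transversal. -/
def bruckBoseInv (s : K) : Matrix (Fin 3) (Fin 5) K :=
  !![1, s, 0, 0, 0; 0, 0, 1, s, 0; 0, 0, 0, 0, 1]

lemma bruckBoseInv_mulVec (s : K) (v : Fin 5 → K) :
    bruckBoseInv s *ᵥ v = ![v 0 + s * v 1, v 2 + s * v 3, v 4] := by
  ext i
  fin_cases i <;> simp [bruckBoseInv, mulVec, dotProduct, Fin.sum_univ_five]

lemma mapVec_bruckBoseInv_mulVec {L : Type} [Field L] (σ : K →+* L) (s : K) (v : Fin 5 → K) :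
    mapVec σ (bruckBoseInv s *ᵥ v) = bruckBoseInv (σ s) *ᵥ mapVec σ v := by
  rw [mapVec_mulVec]
  congr 1
  ext i j
  fin_cases i <;> fin_cases j <;> simp [bruckBoseInv]

lemma eq_of_bruckBoseInv_mulVec_eq {r s : K} (hrs : r ≠ s) {v w : Fin 5 → K}
    (hr : bruckBoseInv r *ᵥ v = bruckBoseInv r *ᵥ w)
    (hs : bruckBoseInv s *ᵥ v = bruckBoseInv s *ᵥ w) : v = w := by
  have hpair {a b a' b' : K} (h : a + r * b = a' + r * b') (h' : a + s * b = a' + s * b') :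
      a = a' ∧ b = b' := by
    have hb : b = b' := by
      apply mul_left_cancel₀ (sub_ne_zero.2 hrs)
      linear_combination h - h'
    exact ⟨by rw [hb] at h; exact add_right_cancel h, hb⟩
  simp only [bruckBoseInv_mulVec, vecCons_inj, and_true] at hr hs
  obtain ⟨h0, h1⟩ := hpair hr.1 hs.1
  obtain ⟨h2, h3⟩ := hpair hr.2.1 hs.2.1
  ext i
  fin_cases i
  exacts [h0, h1, h2, h3, hr.2.2]

/-- The vector of the point with parameter `t` on the line joining `(s, -1, 0, 0, 0)` and
`(0, 0, s, -1, 0)`; this line is a transversal of the spread for `s` equal to `τ` or to its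
conjugate. -/
def transversalVec (s : K) : Option K → Fin 5 → K
  | some δ => ![δ * s, -δ, s, -1, 0]
  | none => ![s, -1, 0, 0, 0]

lemma transversalVec_ne_zero (s : K) (t : Option K) : transversalVec s t ≠ 0 := by
  cases t <;> simp [transversalVec]

/-- The point with parameter `t` of the transversal `g` (for `s` the conjugate of `τ`) or `g^q`
(for `s = τ`). -/
def transversalPt (s : K) (t : Option K) : PP K 5 :=
  Projectivization.mk K (transversalVec s t) (transversalVec_ne_zero s t)

lemma gpt_eq_transversalPt (τ : K) (q : ℕ) (t : Option K) :
    gpt τ q t = transversalPt (τ ^ q) t := by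
  refine mk_eq_mk_of_smul_eq _ _ 1 ?_
  cases t <;> simp [transversalVec, gptVec, A0v, A1v]

lemma gqpt_eq_transversalPt (τ : K) (q : ℕ) (t : Option K) :
    gqpt τ q t = transversalPt τ (t.map (· ^ q)) := by
  refine mk_eq_mk_of_smul_eq _ _ 1 ?_
  cases t <;> simp [transversalVec, gqptVec, B0v, B1v]

lemma mapVec_transversalVec (σ : K →+* K) (s : K) (t : Option K) :
    mapVec σ (transversalVec s t) = transversalVec (σ s) (t.map σ) := by
  ext i
  cases t <;> fin_cases i <;> simp [mapVec, transversalVec]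

lemma bruckBoseInv_mulVec_transversalVec (r s : K) (t : Option K) :
    bruckBoseInv r *ᵥ transversalVec s t = (s - r) • ptInfVec t := by
  rw [bruckBoseInv_mulVec]
  ext i
  cases t <;> fin_cases i <;> simp [transversalVec, ptInfVec] <;> ring

lemma eq_smul_transversalVec {r s : K} (hrs : r ≠ s) {v : Fin 5 → K} {c : K} {t : Option K}
    (hr : bruckBoseInv r *ᵥ v = c • ptInfVec t) (hs : bruckBoseInv s *ᵥ v = 0) :
    v = (c / (s - r)) • transversalVec s t := by
  refine eq_of_bruckBoseInv_mulVec_eq hrs ?_ ?_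
  · rw [hr, mulVec_smul, bruckBoseInv_mulVec_transversalVec, smul_smul,
      div_mul_cancel₀ _ (sub_ne_zero.2 hrs.symm)]
  · rw [hs, mulVec_smul, bruckBoseInv_mulVec_transversalVec, sub_self, zero_smul, smul_zero]

variable {F : Type} [Field F] [Algebra F K] {τ : K} {t0 t1 : F} {c0 c1 : K → F} {σ : K →ₐ[F] K}

lemma eq_of_bruckBoseInv_mulVec_algVec_eq (hσ : σ τ ≠ τ) {v w : Fin 5 → F}
    (h : bruckBoseInv τ *ᵥ algVec F v = bruckBoseInv τ *ᵥ algVec F w) : v = w := by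
  have hconj := congrArg (mapVec (σ : K →+* K)) h
  simp only [mapVec_bruckBoseInv_mulVec, mapVec_algVec] at hconj
  have halg := eq_of_bruckBoseInv_mulVec_eq hσ hconj h
  exact funext fun i ↦ (algebraMap F K).injective (congrFun halg i)

lemma bruckBoseInv_mulVec_algVec_bbVec
    (hc : ∀ x : K, x = algebraMap F K (c0 x) + algebraMap F K (c1 x) * τ) {v : Fin 3 → K}
    (hv : v ≠ 0) (h2 : v 2 ≠ 0) :
    bruckBoseInv τ *ᵥ algVec F (bbVec c0 c1 (Projectivization.mk K v hv)) = (v 2)⁻¹ • v := by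
  obtain ⟨a, ha, hrep⟩ := exists_rep_mk_eq_smul v hv
  have hc' (x : K) : algebraMap F K (c0 x) + τ * algebraMap F K (c1 x) = x := by
    rw [mul_comm, ← hc x]
  rw [bruckBoseInv_mulVec]
  ext i
  fin_cases i <;> simp [bbVec, algVec, hc', hrep, h2] <;> field_simp

lemma mk_eq_bb_mk (hc : ∀ x : K, x = algebraMap F K (c0 x) + algebraMap F K (c1 x) * τ)
    (hσ : σ τ ≠ τ) {w : Fin 5 → F} (hw : w ≠ 0) {v : Fin 3 → K} (hv : v ≠ 0) (h2 : v 2 ≠ 0)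
    {c : K} (h : bruckBoseInv τ *ᵥ algVec F w = c • v) :
    Projectivization.mk F w hw = bb c0 c1 (Projectivization.mk K v hv) := by
  refine mk_eq_mk_of_smul_eq _ _ (w 4) (eq_of_bruckBoseInv_mulVec_algVec_eq hσ ?_)
  have hw4 : algebraMap F K (w 4) = c * v 2 := by
    simpa [bruckBoseInv_mulVec, algVec] using congrFun h 2
  have hsmul (u : Fin 5 → F) :
      (algVec F (w 4 • u) : Fin 5 → K) = algebraMap F K (w 4) • algVec F u :=
    mapVec_smul (algebraMap F K) (w 4) u
  rw [hsmul, mulVec_smul, bruckBoseInv_mulVec_algVec_bbVec hc hv h2, h, hw4, smul_smul,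
    mul_assoc, mul_inv_cancel₀ h2, mul_one]

lemma bruckBoseInv_mulVec_algVec_spreadV1
    (hc : ∀ x : K, x = algebraMap F K (c0 x) + algebraMap F K (c1 x) * τ) (t : Option K) :
    bruckBoseInv τ *ᵥ algVec F (spreadV1 c0 c1 t) = ptInfVec t := by
  rw [bruckBoseInv_mulVec]
  rcases t with _ | δ
  · simp [spreadV1, ptInfVec, algVec]
  · simp [spreadV1, ptInfVec, algVec, mul_comm τ, ← hc δ]

lemma bruckBoseInv_mulVec_algVec_spreadV2
    (hτ : τ ^ 2 = algebraMap F K t1 * τ + algebraMap F K t0)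
    (hc : ∀ x : K, x = algebraMap F K (c0 x) + algebraMap F K (c1 x) * τ) (t : Option K) :
    bruckBoseInv τ *ᵥ algVec F (spreadV2 c0 c1 t0 t1 t) = τ • ptInfVec t := by
  rw [bruckBoseInv_mulVec]
  rcases t with _ | δ
  · simp [spreadV2, ptInfVec, algVec]
  · have h0 : algebraMap F K t0 * algebraMap F K (c1 δ) +
        τ * (algebraMap F K (c0 δ) + algebraMap F K t1 * algebraMap F K (c1 δ)) = τ * δ := by
      linear_combination -τ * hc δ - algebraMap F K (c1 δ) * hτ
    simp [spreadV2, ptInfVec, algVec, h0]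

lemma mem_span_spreadV_of_bruckBoseInv_mulVec_eq
    (hτ : τ ^ 2 = algebraMap F K t1 * τ + algebraMap F K t0)
    (hc : ∀ x : K, x = algebraMap F K (c0 x) + algebraMap F K (c1 x) * τ) (hσ : σ τ ≠ τ)
    {w : Fin 5 → F} {c : K} {t : Option K}
    (h : bruckBoseInv τ *ᵥ algVec F w = c • ptInfVec t) :
    w ∈ Submodule.span F {spreadV1 c0 c1 t, spreadV2 c0 c1 t0 t1 t} := by
  refine Submodule.mem_span_pair.2 ⟨c0 c, c1 c, eq_of_bruckBoseInv_mulVec_algVec_eq hσ ?_⟩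
  have hcomb (v v' : Fin 5 → F) : (algVec F (c0 c • v + c1 c • v') : Fin 5 → K) =
      algebraMap F K (c0 c) • algVec F v + algebraMap F K (c1 c) • algVec F v' :=
    funext fun i ↦ by simp [algVec, Algebra.smul_def]
  rw [hcomb, mulVec_add, mulVec_smul, mulVec_smul, bruckBoseInv_mulVec_algVec_spreadV1 hc,
    bruckBoseInv_mulVec_algVec_spreadV2 hτ hc, smul_smul, ← add_smul, ← hc c, h]

end BruckBose

section TwistedCubic

/-- The matrix of multiplication by `X - r` on coefficient vectors, in the transposed form that
sends `(1, θ, θ², θ³)` to `(θ - r) • (1, θ, θ²)`. -/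
def mulXSub (r : K) : Matrix (Fin 3) (Fin 4) K := !![-r, 1, 0, 0; 0, -r, 1, 0; 0, 0, -r, 1]

lemma mulXSub_mulVec (r : K) (u : Fin 4 → K) :
    mulXSub r *ᵥ u = ![u 1 - r * u 0, u 2 - r * u 1, u 3 - r * u 2] := by
  ext i
  fin_cases i <;> simp [mulXSub, mulVec, dotProduct, Fin.sum_univ_four] <;> ring

lemma mulXSub_mulVec_cubic (r θ : K) :
    mulXSub r *ᵥ ![1, θ, θ ^ 2, θ ^ 3] = (θ - r) • ![1, θ, θ ^ 2] := by
  rw [mulXSub_mulVec]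
  ext i
  fin_cases i <;> simp <;> ring

lemma mulXSub_mulVec_e₃ (r : K) : mulXSub r *ᵥ ![0, 0, 0, 1] = ![0, 0, 1] := by
  simp [mulXSub_mulVec]

variable {F : Type} [Field F] [Algebra F K]

lemma eq_zero_of_mulXSub_mulVec_algVec {r : K} (hr : r ∉ Set.range (algebraMap F K))
    {u : Fin 4 → F} (h : mulXSub r *ᵥ algVec F u = 0) : u = 0 := by
  have hrat {a b : F} (hab : algebraMap F K b - r * algebraMap F K a = 0) : a = 0 := by
    by_contra ha
    have haK : algebraMap F K a ≠ 0 := by simpa using ha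
    refine hr ⟨b / a, ?_⟩
    rw [map_div₀, div_eq_iff haK]
    exact sub_eq_zero.1 hab
  simp only [mulXSub_mulVec, cons_eq_zero_iff] at h
  obtain ⟨h1, h2, h3, -⟩ := h
  have hu2 := hrat h3
  have hu3 : u 3 = 0 := by simpa [algVec, hu2] using h3
  ext i
  fin_cases i
  exacts [hrat h1, hrat h2, hu2, hu3]

lemma exists_isUnit_det_submatrix_castSucc_eq {Q : Matrix (Fin (n + 1)) (Fin n) F}
    (hQ : Function.Injective Q.mulVec) :
    ∃ T : Matrix (Fin (n + 1)) (Fin (n + 1)) F, IsUnit T.det ∧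
      T.submatrix id Fin.castSucc = Q := by
  have hli : LinearIndependent F Q.col := mulVec_injective_iff.1 hQ
  obtain ⟨x, hx⟩ : ∃ x : Fin (n + 1) → F, x ∉ Submodule.span F (Set.range Q.col) := by
    by_contra! h
    have hcard := finrank_span_eq_card hli
    rw [(Submodule.eq_top_iff' (p := Submodule.span F (Set.range Q.col))).2 h] at hcard
    simp at hcard
  refine ⟨of fun i j ↦ (Fin.snoc Q.col x : Fin (n + 1) → Fin (n + 1) → F) j i, ?_, ?_⟩
  · rw [← isUnit_iff_isUnit_det, ← linearIndependent_cols_iff_isUnit]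
    exact linearIndependent_finSnoc.2 ⟨hli, hx⟩
  · ext i j
    exact congrFun (Fin.snoc_castSucc (α := fun _ ↦ Fin (n + 1) → F) x Q.col j) i

lemma mulVec_eq_submatrix_castSucc_mulVec {T : Matrix (Fin m) (Fin (n + 1)) K}
    {v : Fin (n + 1) → K} (hv : v (Fin.last n) = 0) :
    T *ᵥ v = T.submatrix id Fin.castSucc *ᵥ Fin.init v := by
  ext i
  simp [mulVec, dotProduct, Fin.sum_univ_castSucc, hv, Fin.init]

variable {τ : K} {t0 t1 : F} {c0 c1 : K → F} {σ : K →ₐ[F] K}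

lemma exists_bruckBoseInv_mul_map_eq
    (hc : ∀ x : K, x = algebraMap F K (c0 x) + algebraMap F K (c1 x) * τ)
    {A : Matrix (Fin 3) (Fin n) K} (hA : ∀ j, A 2 j ∈ Set.range (algebraMap F K)) :
    ∃ Q : Matrix (Fin 5) (Fin n) F, bruckBoseInv τ * Q.map (algebraMap F K) = A := by
  choose z hz using hA
  refine ⟨of ![c0 ∘ A 0, c1 ∘ A 0, c0 ∘ A 1, c1 ∘ A 1, z], ?_⟩
  have hc' (x : K) : algebraMap F K (c0 x) + τ * algebraMap F K (c1 x) = x := by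
    rw [mul_comm, ← hc x]
  ext i j
  fin_cases i <;> simp [bruckBoseInv, mul_apply, Fin.sum_univ_five, hc', hz]

/-- The twisted cubic with matrix `T` lies over the conic with matrix `M`: under the projection from
the transversal line attached to `τ` the point with parameter `θ` goes to the point with parameter
`θ`, except that the point with parameter `r` lies on the transversal line itself. -/
structure IsTwistedCubicLift (τ r : K) (M : Matrix (Fin 3) (Fin 3) K)
    (T : Matrix (Fin 5) (Fin 5) F) : Prop where
  mulVec_cubic : ∀ θ : K, bruckBoseInv τ *ᵥ
    (T.map (algebraMap F K) *ᵥ ![1, θ, θ ^ 2, θ ^ 3, 0]) = (θ - r) • M *ᵥ ![1, θ, θ ^ 2]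
  mulVec_e₃ : bruckBoseInv τ *ᵥ (T.map (algebraMap F K) *ᵥ ![0, 0, 0, 1, 0]) = M *ᵥ ![0, 0, 1]

/-- The third row of `M * mulXSub r` is `F`-rational when `r` is the conjugate of `ρ`: its entries
are the coefficients of `(X - ρ) (X - r)`. -/
lemma mul_mulXSub_row_mem_range
    (hτ : τ ^ 2 = algebraMap F K t1 * τ + algebraMap F K t0)
    (hc : ∀ x : K, x = algebraMap F K (c0 x) + algebraMap F K (c1 x) * τ) (hσ : σ τ ≠ τ)
    {M : Matrix (Fin 3) (Fin 3) K} {ρ : K} (hrow : M 2 = ![-ρ, 1, 0]) (j : Fin 4) :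
    (M * mulXSub (σ ρ)) 2 j ∈ Set.range (algebraMap F K) := by
  apply mem_range_of_conj_eq hc hσ
  have hσσ := conj_conj hτ hσ hc ρ
  fin_cases j <;> simp [mul_apply, mulXSub, hrow, Fin.sum_univ_three, hσσ] <;> ring

theorem exists_isTwistedCubicLift
    (hτ : τ ^ 2 = algebraMap F K t1 * τ + algebraMap F K t0)
    (hc : ∀ x : K, x = algebraMap F K (c0 x) + algebraMap F K (c1 x) * τ) (hσ : σ τ ≠ τ)
    {M : Matrix (Fin 3) (Fin 3) K} (hM : IsUnit M.det) {ρ : K}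
    (hρ : ρ ∉ Set.range (algebraMap F K)) (hrow : M 2 = ![-ρ, 1, 0]) :
    ∃ T : Matrix (Fin 5) (Fin 5) F, IsUnit T.det ∧ IsTwistedCubicLift τ (σ ρ) M T := by
  obtain ⟨Q, hQ⟩ := exists_bruckBoseInv_mul_map_eq hc (mul_mulXSub_row_mem_range hτ hc hσ hrow)
  have hinj : Function.Injective Q.mulVec := by
    rw [← coe_mulVecLin, ← LinearMap.ker_eq_bot, LinearMap.ker_eq_bot']
    intro u (hu : Q *ᵥ u = 0)
    have halg : (algVec F 0 : Fin 5 → K) = 0 := funext fun _ ↦ map_zero _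
    refine eq_zero_of_mulXSub_mulVec_algVec (conj_notMem_range hτ hσ hc hρ)
      (mulVec_inj M hM ?_)
    rw [mulVec_mulVec, ← hQ, ← mulVec_mulVec, map_mulVec_algVec, hu, halg, mulVec_zero, mulVec_zero]
  obtain ⟨T, hT, rfl⟩ := exists_isUnit_det_submatrix_castSucc_eq hinj
  have hlift (v : Fin 5 → K) (hv : v (Fin.last 4) = 0) : bruckBoseInv τ *ᵥ
      (T.map (algebraMap F K) *ᵥ v) = M *ᵥ (mulXSub (σ ρ) *ᵥ Fin.init v) := by
    rw [mulVec_eq_submatrix_castSucc_mulVec hv, mulVec_mulVec, mulVec_mulVec, ← hQ, submatrix_map]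
  refine ⟨T, hT, fun θ ↦ ?_, ?_⟩
  · have hinit : Fin.init ![1, θ, θ ^ 2, θ ^ 3, 0] = ![1, θ, θ ^ 2, θ ^ 3] := by
      ext i
      fin_cases i <;> rfl
    rw [hlift _ rfl, hinit, mulXSub_mulVec_cubic, mulVec_smul]
  · have hinit : Fin.init (![0, 0, 0, 1, 0] : Fin 5 → K) = ![0, 0, 0, 1] := by
      ext i
      fin_cases i <;> rfl
    rw [hlift _ rfl, hinit, mulXSub_mulVec_e₃]

end TwistedCubic

section SpecialCubic

variable {F : Type} [Field F] [Algebra F K] {τ r ρ κ : K} {t0 t1 : F} {c0 c1 : K → F}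
  {σ : K →ₐ[F] K} {M : Matrix (Fin 3) (Fin 3) K} {T : Matrix (Fin 5) (Fin 5) F} {t s : Option K}

namespace IsTwistedCubicLift

lemma mulVec_algVec_cubic (h : IsTwistedCubicLift τ r M T) (θ : F) :
    bruckBoseInv τ *ᵥ algVec F (T *ᵥ ![1, θ, θ ^ 2, θ ^ 3, 0]) =
      (algebraMap F K θ - r) • M *ᵥ ![1, algebraMap F K θ, algebraMap F K θ ^ 2] := by
  rw [← h.mulVec_cubic, ← map_mulVec_algVec]
  congr
  ext i
  fin_cases i <;> simp [algVec]

lemma mulVec_algVec_e₃ (h : IsTwistedCubicLift τ r M T) :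
    bruckBoseInv τ *ᵥ algVec F (T *ᵥ ![0, 0, 0, 1, 0]) = M *ᵥ ![0, 0, 1] := by
  rw [← h.mulVec_e₃, ← map_mulVec_algVec]
  congr
  ext i
  fin_cases i <;> simp [algVec]

lemma mulVec_cubic_four_ne_zero (h : IsTwistedCubicLift τ r M T)
    (hr : r ∉ Set.range (algebraMap F K)) (hρ : ρ ∉ Set.range (algebraMap F K))
    (hrow : M 2 = ![-ρ, 1, 0]) (θ : F) : (T *ᵥ ![1, θ, θ ^ 2, θ ^ 3, 0]) 4 ≠ 0 := by
  have h4 : algebraMap F K ((T *ᵥ ![1, θ, θ ^ 2, θ ^ 3, 0]) 4) =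
      (algebraMap F K θ - r) * (algebraMap F K θ - ρ) := by
    simpa [bruckBoseInv_mulVec, algVec, mulVec_two_of_row_eq hrow] using
      congrFun (h.mulVec_algVec_cubic θ) 2
  intro h0
  rw [h0, map_zero, zero_eq_mul, sub_eq_zero, sub_eq_zero] at h4
  exact h4.elim (fun e ↦ hr ⟨θ, e⟩) fun e ↦ hρ ⟨θ, e⟩

lemma mulVec_e₃_four (h : IsTwistedCubicLift τ r M T) (hrow : M 2 = ![-ρ, 1, 0]) :
    (T *ᵥ ![0, 0, 0, 1, 0]) 4 = 0 := by
  have hz : (M *ᵥ ![0, 0, 1]) 2 = 0 := by simp [mulVec, hrow]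
  have h4 := congrFun h.mulVec_algVec_e₃ 2
  rw [hz, bruckBoseInv_mulVec] at h4
  exact (map_eq_zero (algebraMap F K)).1 h4

theorem mimg_tcVecs_diff_sinf (h : IsTwistedCubicLift τ r M T) (hT : IsUnit T.det)
    (hM : IsUnit M.det)
    (hc : ∀ x : K, x = algebraMap F K (c0 x) + algebraMap F K (c1 x) * τ) (hσ : σ τ ≠ τ)
    (hr : r ∉ Set.range (algebraMap F K)) (hρ : ρ ∉ Set.range (algebraMap F K))
    (hrow : M 2 = ![-ρ, 1, 0]) (he : M *ᵥ ![0, 0, 1] = κ • ptInfVec t) :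
    mimg T (tcVecs Set.univ) \ sinf F =
      bb c0 c1 '' (mimg M (conicVecs (Set.range (algebraMap F K))) \ {ptInf t}) := by
  have hTv (θ : F) : T *ᵥ ![1, θ, θ ^ 2, θ ^ 3, 0] ≠ 0 := mulVec_ne_zero hT (by simp)
  have hMv (θ : K) : M *ᵥ ![1, θ, θ ^ 2] ≠ 0 := mulVec_ne_zero hM (by simp)
  have hz (θ : F) : (M *ᵥ ![1, algebraMap F K θ, algebraMap F K θ ^ 2]) 2 ≠ 0 := by
    rw [mulVec_two_of_row_eq hrow, sub_ne_zero]
    exact fun e ↦ hρ ⟨θ, e⟩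
  have hbb (θ : F) := mk_eq_bb_mk hc hσ (hTv θ) (hMv (algebraMap F K θ)) (hz θ)
    (h.mulVec_algVec_cubic θ)
  ext p
  constructor
  · rintro ⟨⟨_, ⟨θ, -, rfl⟩ | rfl, hv, rfl⟩, hp⟩
    · refine ⟨_, ⟨⟨_, .inl ⟨_, ⟨θ, rfl⟩, rfl⟩, hMv _, rfl⟩, fun e ↦ hz θ ?_⟩, (hbb θ).symm⟩
      exact (mk_mem_linf_iff _ (hMv _)).1 (e ▸ ptInf_mem_linf t)
    · exact absurd ((mk_mem_sinf_iff _ hv).2 (h.mulVec_e₃_four hrow)) hp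
  · rintro ⟨_, ⟨⟨_, ⟨_, ⟨θ, rfl⟩, rfl⟩ | rfl, hv, rfl⟩, hp⟩, rfl⟩
    · rw [← hbb θ]
      refine ⟨⟨_, .inl ⟨θ, trivial, rfl⟩, hTv θ, rfl⟩, ?_⟩
      rw [mk_mem_sinf_iff]
      exact h.mulVec_cubic_four_ne_zero hr hρ hrow θ
    · exact absurd (ptInf_eq_mk hv he).symm hp

theorem mimg_tcVecs_inter_sinf (h : IsTwistedCubicLift τ r M T) (hT : IsUnit T.det)
    (hr : r ∉ Set.range (algebraMap F K)) (hρ : ρ ∉ Set.range (algebraMap F K))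
    (hrow : M 2 = ![-ρ, 1, 0]) :
    mimg T (tcVecs Set.univ) ∩ sinf F =
      {Projectivization.mk F (T *ᵥ ![0, 0, 0, 1, 0]) (mulVec_ne_zero hT (by simp))} := by
  refine Set.Subset.antisymm ?_ ?_
  · rintro p ⟨⟨_, ⟨θ, -, rfl⟩ | rfl, hv, rfl⟩, hp⟩
    · exact absurd ((mk_mem_sinf_iff _ hv).1 hp) (h.mulVec_cubic_four_ne_zero hr hρ hrow θ)
    · rfl
  · rintro _ rfl
    exact ⟨⟨_, .inr rfl, _, rfl⟩, (mk_mem_sinf_iff _ _).2 (h.mulVec_e₃_four hrow)⟩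

/-- The other projection kills the point with parameter `ρ`: conjugate `mulVec_cubic` at `σ ρ`,
where the factor `θ - σ ρ` vanishes. -/
lemma exists_mulVec_eq_smul_transversalVec (h : IsTwistedCubicLift τ (σ ρ) M T)
    (hσ : σ τ ≠ τ) (hσσ : σ (σ ρ) = ρ) (hσρ : σ ρ ≠ ρ) {c : K} (hc : c ≠ 0)
    (hs : M *ᵥ ![1, ρ, ρ ^ 2] = c • ptInfVec s) :
    ∃ d : K, d ≠ 0 ∧ T.map (algebraMap F K) *ᵥ ![1, ρ, ρ ^ 2, ρ ^ 3, 0] =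
      d • transversalVec (σ τ) s := by
  have hconj : mapVec (σ : K →+* K) ![1, σ ρ, σ ρ ^ 2, σ ρ ^ 3, 0] = ![1, ρ, ρ ^ 2, ρ ^ 3, 0] := by
    ext i
    fin_cases i <;> simp [mapVec, hσσ]
  have hτρ : bruckBoseInv τ *ᵥ (T.map (algebraMap F K) *ᵥ ![1, ρ, ρ ^ 2, ρ ^ 3, 0]) =
      ((ρ - σ ρ) * c) • ptInfVec s := by
    rw [h.mulVec_cubic, hs, smul_smul]
  have hστρ : bruckBoseInv (σ τ) *ᵥ (T.map (algebraMap F K) *ᵥ ![1, ρ, ρ ^ 2, ρ ^ 3, 0]) = 0 := by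
    have h0 := congrArg (mapVec (σ : K →+* K)) (h.mulVec_cubic (σ ρ))
    rw [mapVec_bruckBoseInv_mulVec, mapVec_map_mulVec, hconj, sub_self, zero_smul] at h0
    exact h0.trans (funext fun _ ↦ map_zero σ)
  exact ⟨_, div_ne_zero (mul_ne_zero (sub_ne_zero.2 hσρ.symm) hc) (sub_ne_zero.2 hσ),
    eq_smul_transversalVec hσ.symm hτρ hστρ⟩

theorem transversalPt_mem_mimg_tcVecs (h : IsTwistedCubicLift τ (σ ρ) M T)
    (hσ : σ τ ≠ τ) (hσσ : σ (σ ρ) = ρ) (hσρ : σ ρ ≠ ρ) {c : K} (hc : c ≠ 0)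
    (hs : M *ᵥ ![1, ρ, ρ ^ 2] = c • ptInfVec s) :
    transversalPt (σ τ) s ∈ mimg (T.map (algebraMap F K)) (tcVecs Set.univ) := by
  obtain ⟨d, hd, hρ⟩ := h.exists_mulVec_eq_smul_transversalVec hσ hσσ hσρ hc hs
  exact (mk_mem_mimg_iff _).2 ⟨_, .inl ⟨ρ, trivial, rfl⟩, d, hd, hρ⟩

end IsTwistedCubicLift

lemma transversalPt_conj_mem_mimg_tcVecs
    (h : transversalPt r s ∈ mimg (T.map (algebraMap F K)) (tcVecs Set.univ)) :
    transversalPt (σ r) (s.map σ) ∈ mimg (T.map (algebraMap F K)) (tcVecs Set.univ) := by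
  obtain ⟨v, hv, d, hd, hvd⟩ := (mk_mem_mimg_iff _).1 h
  have hσv : mapVec (σ : K →+* K) v ∈ tcVecs Set.univ := by
    rcases hv with ⟨θ, -, rfl⟩ | rfl
    · refine .inl ⟨σ θ, trivial, ?_⟩
      ext i
      fin_cases i <;> simp [mapVec]
    · refine .inr ?_
      ext i
      fin_cases i <;> simp [mapVec]
  refine (mk_mem_mimg_iff _).2 ⟨_, hσv, σ d, by simpa using hd, ?_⟩
  rw [← mapVec_map_mulVec, hvd, mapVec_smul, mapVec_transversalVec]
  rfl

end SpecialCubic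

lemma nonempty_fin_embedding_of_le_card {α : Type*} (h : n ≤ ENat.card α) :
    Nonempty (Fin n ↪ α) := by
  obtain ⟨f, -⟩ := Fin.Embedding.exists_embedding_disjoint_range_of_add_le_ENat_card
    (s := (∅ : Set α)) (n := n) (by simpa using h)
  exact ⟨f⟩

theorem statement_16_general {F K : Type} [Field F] [Field K] [Algebra F K]
    (hF : 4 ≤ ENat.card F) {τ : K} {t0 t1 : F}
    (hτ : τ ^ 2 = algebraMap F K t1 * τ + algebraMap F K t0) {c0 c1 : K → F}
    (hc : ∀ x : K, x = algebraMap F K (c0 x) + algebraMap F K (c1 x) * τ)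
    {σ : K →ₐ[F] K} (hσ : σ τ ≠ τ) {B : Set (PP K 3)} (hB : IsBaerSubplane F B)
    {tT : Option K} (hT : B ∩ linf K = {ptInf tT})
    {C : Set (PP K 3)} (hC : IsFqConic F C) (hCB : C ⊆ B) (hTC : ptInf tT ∈ C)
    {D : Set (PP K 3)} (hD : IsFq2Conic D) (hCD : C ⊆ D) :
    ∃ tP : Option K, ptInf tP ≠ ptInf tT ∧ D ∩ linf K = {ptInf tT, ptInf tP} ∧
      ∃ M5 : Matrix (Fin 5) (Fin 5) F, IsUnit M5.det ∧
        mimg M5 (tcVecs Set.univ) \ sinf F = bb c0 c1 '' (C \ {ptInf tT}) ∧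
        (∃! p : PP F 5, p ∈ mimg M5 (tcVecs Set.univ) ∩ sinf F) ∧
        mimg M5 (tcVecs Set.univ) ∩ sinf F ⊆ spreadLine c0 c1 t0 t1 tT ∧
        transversalPt (σ τ) tP ∈ mimg (M5.map (algebraMap F K)) (tcVecs Set.univ) ∧
        transversalPt τ (tP.map σ) ∈ mimg (M5.map (algebraMap F K)) (tcVecs Set.univ) := by
  obtain ⟨f⟩ := nonempty_fin_embedding_of_le_card (n := 4) hF
  obtain ⟨M, ρ, κ, hM, rfl, hρ, hrow, he⟩ :=
    exists_conic_matrix_of_tangent ((by norm_num : (3 : ℕ∞) ≤ 4).trans hF) hB hT hC hCB hTC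
  obtain ⟨N, hN, rfl⟩ := hD
  rw [mimg_conicVecs_univ_eq_of_range_subset hM hN f hCD]
  obtain ⟨s, c, hc0, hs, hst, hinf⟩ := exists_mimg_conicVecs_univ_inter_linf hM hrow he
  obtain ⟨T, hT, h⟩ := exists_isTwistedCubicLift hτ hc hσ hM hρ hrow
  have hr := conj_notMem_range hτ hσ hc hρ
  have hsinf := h.mimg_tcVecs_inter_sinf hT hr hρ hrow
  have hσρ : σ ρ ≠ ρ := fun e ↦ hρ (mem_range_of_conj_eq hc hσ e)
  have hg := h.transversalPt_mem_mimg_tcVecs hσ (conj_conj hτ hσ hc ρ) hσρ hc0 hs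
  refine ⟨s, hst, hinf, T, hT, h.mimg_tcVecs_diff_sinf hT hM hc hσ hr hρ hrow he, ?_, ?_, hg, ?_⟩
  · rw [hsinf]
    exact ⟨_, rfl, fun _ ↦ id⟩
  · rw [hsinf, Set.singleton_subset_iff]
    exact mk_mem_ptsOf _
      (mem_span_spreadV_of_bruckBoseInv_mulVec_eq hτ hc hσ (h.mulVec_algVec_e₃.trans he))
  · simpa only [conj_conj hτ hσ hc] using transversalPt_conj_mem_mimg_tcVecs (σ := σ) hg

lemma mem_range_algebraMap_of_pow_card_eq {F K : Type*} [Field F] [Field K] [Fintype F] [Finite K]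
    [Algebra F K] {x : K} (hx : x ^ Fintype.card F = x) : x ∈ Set.range (algebraMap F K) := by
  refine (IsGalois.mem_range_algebraMap_iff_fixed x).2 fun e ↦ ?_
  obtain ⟨k, rfl⟩ := (FiniteField.bijective_frobeniusAlgEquivOfAlgebraic_pow F K).2 e
  rw [AlgEquiv.coe_pow]
  exact Function.iterate_fixed hx k

/-- An `F_q`-conic `C` through `T̄` in a Baer subplane tangent to `ℓ∞` at `T̄`
corresponds in `PG(4,q)` to a `g`-special twisted cubic: `ℓ∞` is secant to `C⁺`, say at
`T̄` and `P̄`, and there is a twisted cubic `N` whose affine points are the Bruck-Bose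
images of `C \ {T̄}`, which meets `Σ∞` in a single point of the spread line `[T]`, and
whose extension contains the points `P ∈ g` and `P^q ∈ g^q`. -/
theorem statement_16
    {F K : Type} [Field F] [Field K] [Fintype F] [Fintype K] [Algebra F K]
    (q : ℕ) (hq : Fintype.card F = q) (hK : Fintype.card K = q ^ 2)
    (τ : K) (t0 t1 : F)
    (hτ : τ ^ 2 = algebraMap F K t1 * τ + algebraMap F K t0)
    (hτF : τ ∉ Set.range (algebraMap F K))
    (c0 c1 : K → F)
    (hc : ∀ x : K, x = algebraMap F K (c0 x) + algebraMap F K (c1 x) * τ)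
    (hq5 : 5 < q)
    (B : Set (PP K 3)) (hB : IsBaerSubplane F B)
    (tT : Option K) (hT : B ∩ linf K = {ptInf tT})
    (C : Set (PP K 3)) (hC : IsFqConic F C) (hCB : C ⊆ B) (hTC : ptInf tT ∈ C) :
    ∀ D : Set (PP K 3), IsFq2Conic D → C ⊆ D →
      ∃ tP : Option K, ptInf tP ≠ ptInf tT ∧
        D ∩ linf K = {ptInf tT, ptInf tP} ∧
        ∃ M5 : Matrix (Fin 5) (Fin 5) F, IsUnit M5.det ∧
          mimg M5 (tcVecs (Set.univ : Set F)) \ sinf F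
            = bb c0 c1 '' (C \ {ptInf tT}) ∧
          (∃! p : PP F 5, p ∈ mimg M5 (tcVecs (Set.univ : Set F)) ∩ sinf F) ∧
          mimg M5 (tcVecs (Set.univ : Set F)) ∩ sinf F
            ⊆ spreadLine c0 c1 t0 t1 tT ∧
          gpt τ q tP ∈ mimg (M5.map (algebraMap F K)) (tcVecs (Set.univ : Set K)) ∧
          gqpt τ q tP ∈ mimg (M5.map (algebraMap F K)) (tcVecs (Set.univ : Set K)) := by
  intro D hD hCD
  have hF : (4 : ℕ∞) ≤ ENat.card F := by
    rw [ENat.card_eq_coe_fintype_card, hq]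
    exact_mod_cast (by lia : 4 ≤ q)
  subst hq
  simp only [gpt_eq_transversalPt, gqpt_eq_transversalPt]
  exact statement_16_general (σ := FiniteField.frobeniusAlgHom F K) hF hτ hc
    (fun h ↦ hτF (mem_range_algebraMap_of_pow_card_eq h)) hB hT hC hCB hTC hD hCD

end BaerConics
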